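/- arXiv:2408.10223 — 11 statements merged into one kernel-verified Lean document; each statement's English description precedes it below -/
import Mathlib

section
/- Fix a grid step h > 0 and a reference point x ∈ ℝ. For all real numbers a, b, c there exists a unique polynomial q with real coefficients of degree at most 2 such that q(x − h) = a, the cell average of q over [x − h, x] equals b, and q(x) = c. -/
open intervalIntegral

/-!
The polynomials of degree at most `n` with prescribed values at `n` distinct nodes form a line:
the Lagrange interpolant plus the multiples of the nodal polynomial. A linear functional that does
not vanish on the nodal polynomial takes each value exactly once on that line. For the cell average
over `[α, β]` and the nodes `α`, `β`, its value on the nodal polynomial is `-(β - α)² / 6`.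
-/

open Polynomial Lagrange

section Unisolvence

variable {F ι : Type*} [Field F] {s : Finset ι} {v : ι → F}

lemma nodal_dvd_of_eval_eq_zero (hv : Set.InjOn v s) {p : F[X]}
    (hp : ∀ i ∈ s, p.eval (v i) = 0) : nodal s v ∣ p :=
  Finset.prod_dvd_of_coprime
    (fun _ hi _ hj hij ↦ isCoprime_X_sub_C_of_isUnit_sub (sub_ne_zero.2 (hv.ne hi hj hij)).isUnit)
    fun i hi ↦ dvd_iff_isRoot.2 (hp i hi)

lemma natDegree_le_card_and_eval_eq_iff [DecidableEq ι] (hv : Set.InjOn v s) (r : ι → F)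
    {p : F[X]} :
    (p.natDegree ≤ s.card ∧ ∀ i ∈ s, p.eval (v i) = r i) ↔
      ∃ k : F, p = interpolate s v r + k • nodal s v := by
  have natDegree_interpolate_le : (interpolate s v r).natDegree ≤ s.card :=
    natDegree_le_iff_degree_le.2 (degree_interpolate_lt r hv).le
  constructor
  · rintro ⟨hdeg, heval⟩
    have hdvd : nodal s v ∣ p - interpolate s v r :=
      nodal_dvd_of_eval_eq_zero hv fun i hi ↦ by
        rw [eval_sub, heval i hi, eval_interpolate_at_node r hv hi, sub_self]
    have hle : (p - interpolate s v r).natDegree ≤ (nodal s v).natDegree :=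
      (natDegree_sub_le_of_le hdeg natDegree_interpolate_le).trans_eq
        ((max_self _).trans natDegree_nodal.symm)
    refine ⟨(p - interpolate s v r).leadingCoeff, ?_⟩
    rw [smul_eq_C_mul,
      ← eq_leadingCoeff_mul_of_monic_of_dvd_of_natDegree_le nodal_monic hdvd hle, add_sub_cancel]
  · rintro ⟨k, rfl⟩
    refine ⟨natDegree_add_le_of_degree_le natDegree_interpolate_le
      ((natDegree_smul_le k _).trans natDegree_nodal.le), fun i hi ↦ ?_⟩
    rw [eval_add, eval_smul, eval_interpolate_at_node r hv hi, eval_nodal_at_node hi, smul_zero,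
      add_zero]

theorem existsUnique_natDegree_le_card_and_eval_eq_and_apply_eq (hv : Set.InjOn v s)
    {φ : F[X] →ₗ[F] F} (hφ : φ (nodal s v) ≠ 0) (r : ι → F) (b : F) :
    ∃! p : F[X], (p.natDegree ≤ s.card ∧ ∀ i ∈ s, p.eval (v i) = r i) ∧ φ p = b := by
  classical
  have apply_eq_iff (k : F) : φ (interpolate s v r + k • nodal s v) = b ↔
      k = (b - φ (interpolate s v r)) / φ (nodal s v) := by
    rw [map_add, map_smul, smul_eq_mul, eq_div_iff hφ, eq_sub_iff_add_eq']
  simp only [natDegree_le_card_and_eval_eq_iff hv]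
  refine ⟨_, ⟨⟨_, rfl⟩, (apply_eq_iff _).2 rfl⟩, ?_⟩
  rintro _ ⟨⟨k, rfl⟩, hk⟩
  rw [(apply_eq_iff k).1 hk]

end Unisolvence

/-- The cell average over `[α, β]`, bundled as a linear functional on real polynomials so that it
can supplement point evaluations as an interpolation condition; by the convention `1 / 0 = 0` it is
zero when `α = β`. -/
noncomputable def cellAverage (α β : ℝ) : ℝ[X] →ₗ[ℝ] ℝ where
  toFun p := (1 / (β - α)) * ∫ s in α..β, p.eval s
  map_add' p q := by
    simp only [eval_add]
    rw [integral_add (p.continuous.intervalIntegrable _ _) (q.continuous.intervalIntegrable _ _),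
      mul_add]
  map_smul' k p := by
    simp only [eval_smul, integral_smul, RingHom.id_apply, mul_smul_comm]

lemma cellAverage_apply (α β : ℝ) (p : ℝ[X]) :
    cellAverage α β p = (1 / (β - α)) * ∫ s in α..β, p.eval s :=
  rfl

lemma integral_sub_mul_sub (α β : ℝ) :
    ∫ s in α..β, (s - α) * (s - β) = -(β - α) ^ 3 / 6 := by
  calc ∫ s in α..β, (s - α) * (s - β)
      = ∫ s in α..β, (s - α) * (s - α - (β - α)) := by simp only [sub_sub_sub_cancel_right]
    _ = ∫ t in (0)..(β - α), t * (t - (β - α)) := by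
      rw [integral_comp_sub_right (fun t ↦ t * (t - (β - α))), sub_self]
    _ = ∫ t in (0)..(β - α), (t ^ 2 - t * (β - α)) := by simp only [mul_sub, sq]
    _ = -(β - α) ^ 3 / 6 := by
      rw [integral_sub (intervalIntegrable_pow 2) (intervalIntegrable_id.mul_const _), integral_pow,
        integral_mul_const, integral_id]
      ring

lemma cellAverage_nodal_endpoints (α β : ℝ) :
    cellAverage α β (nodal Finset.univ ![α, β]) = -(β - α) ^ 2 / 6 := by
  have eval_nodal_endpoints (s : ℝ) :
      (nodal Finset.univ ![α, β]).eval s = (s - α) * (s - β) := by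
    simp [eval_nodal, Fin.prod_univ_two]
  simp only [cellAverage_apply, eval_nodal_endpoints, integral_sub_mul_sub]
  field_simp

/-- Unisolvence of the CFWENO3 (r = 2) big-stencil Hermite–Birkhoff interpolation:
one cell average and the two endpoint values determine a unique quadratic. -/
theorem stmt_1 (h : ℝ) (hh : 0 < h) (x a b c : ℝ) :
    ∃! q : Polynomial ℝ, q.natDegree ≤ 2 ∧
      q.eval (x - h) = a ∧
      (1 / h) * ∫ s in (x - h)..x, q.eval s = b ∧
      q.eval x = c := by
  have endpoints_injective : Function.Injective ![x - h, x] := by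
    simpa [Function.Injective, Fin.forall_fin_two, eq_comm (a := x)] using hh.ne'
  have nodal_average_ne_zero :
      cellAverage (x - h) x (nodal Finset.univ ![x - h, x]) ≠ 0 := by
    simp [cellAverage_nodal_endpoints, hh.ne']
  have unisolvent := existsUnique_natDegree_le_card_and_eval_eq_and_apply_eq
    endpoints_injective.injOn nodal_average_ne_zero ![a, c] b
  simpa [cellAverage_apply, Fin.forall_fin_two, and_assoc, and_comm, and_left_comm]
    using unisolvent
end

section
/- Fix a grid step h > 0 and a reference point x ∈ ℝ. For all real numbers A, B, C and a₀, a₁, a₂, a₃ there exists a unique polynomial q with real coefficients of degree at most 6 such that the cell averages of q over [x − 2h, x − h], [x − h, x], [x, x + h] equal A, B, C respectively, and q(x − 2h) = a₀, q(x − h) = a₁, q(x) = a₂, q(x + h) = a₃. -/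
open intervalIntegral

/-!
The primitive `P` of the unknown polynomial `q` that vanishes at the first node turns cell averages
into point values: prescribing the averages of `q` on consecutive cells amounts to prescribing `P`
at every node, while the point values of `q` are those of `P'`. So `P` solves a Hermite
interpolation problem with every node doubled, of degree at most `2n + 1` for `n + 1` nodes. That
problem is unisolvent: a solution with zero data has `2n + 2` roots counted with multiplicity, and
existence follows from uniqueness by comparing dimensions.
-/

open Polynomial
open scoped Finset

section Hermite

theorem eq_zero_of_degree_lt_of_isRoot_of_isRoot_derivative {R : Type*} [CommRing R] [IsDomain R]
    {p : R[X]} {s : Finset R} (hdeg : p.degree < (2 * #s : ℕ)) (hp : ∀ x ∈ s, p.IsRoot x)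
    (hp' : ∀ x ∈ s, (derivative p).IsRoot x) : p = 0 := by
  classical
  by_contra hp0
  have nsmul_le_roots : 2 • s.val ≤ p.roots := by
    refine Multiset.le_iff_count.2 fun x => ?_
    by_cases hx : x ∈ s
    · rw [Multiset.count_nsmul, Multiset.count_eq_one_of_mem s.nodup hx, count_roots]
      exact (one_lt_rootMultiplicity_iff_isRoot hp0).2 ⟨hp x hx, hp' x hx⟩
    · rw [Multiset.count_nsmul, Multiset.count_eq_zero_of_notMem hx]
      exact Nat.zero_le _
  have card_le : 2 * #s ≤ p.natDegree := by
    simpa using (Multiset.card_le_card nsmul_le_roots).trans p.card_roots'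
  exact ((natDegree_lt_iff_degree_lt hp0).2 hdeg).not_ge card_le

variable {ι F : Type*} [Field F] (v : ι → F)

/-- The linear map sending a polynomial to its Hermite interpolation data: its values and the values
of its derivative at the nodes `v i`. -/
noncomputable def hermiteData : F[X] →ₗ[F] (ι → F) × (ι → F) :=
  (LinearMap.pi fun i => leval (v i)).prod (LinearMap.pi fun i => leval (v i) ∘ₗ derivative)

theorem hermiteData_eq_iff {p : F[X]} {b d : ι → F} :
    hermiteData v p = (b, d) ↔
      (∀ i, p.eval (v i) = b i) ∧ ∀ i, (derivative p).eval (v i) = d i := by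
  simp [hermiteData, funext_iff]

variable [Fintype ι] {v}

theorem hermiteData_domRestrict_injective (hv : v.Injective) :
    Function.Injective ((hermiteData v).domRestrict (degreeLT F (2 * Fintype.card ι))) := by
  classical
  refine (injective_iff_map_eq_zero _).2 fun ⟨p, hdeg⟩ hp => Subtype.ext ?_
  obtain ⟨hval, hder⟩ := (hermiteData_eq_iff v (b := 0) (d := 0)).1 hp
  refine eq_zero_of_degree_lt_of_isRoot_of_isRoot_derivative (s := Finset.univ.image v) ?_
    (by simpa using hval) (by simpa using hder)
  rwa [Finset.card_image_of_injective _ hv, Finset.card_univ, ← mem_degreeLT]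

theorem hermiteData_domRestrict_bijective (hv : v.Injective) :
    Function.Bijective ((hermiteData v).domRestrict (degreeLT F (2 * Fintype.card ι))) := by
  have hinj := hermiteData_domRestrict_injective hv
  have : FiniteDimensional F (degreeLT F (2 * Fintype.card ι)) :=
    (degreeLTEquiv F _).symm.finiteDimensional
  have finrank_eq : Module.finrank F (degreeLT F (2 * Fintype.card ι)) =
      Module.finrank F ((ι → F) × (ι → F)) := by
    simp [(degreeLTEquiv F _).finrank_eq, two_mul]
  exact ⟨hinj, (LinearMap.injective_iff_surjective_of_finrank_eq_finrank finrank_eq).1 hinj⟩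

theorem existsUnique_hermite_interpolant (hv : v.Injective) (b d : ι → F) :
    ∃! p : F[X], p ∈ degreeLT F (2 * Fintype.card ι) ∧
      (∀ i, p.eval (v i) = b i) ∧ ∀ i, (derivative p).eval (v i) = d i := by
  obtain ⟨⟨p, hdeg⟩, hp, hunique⟩ :=
    (hermiteData_domRestrict_bijective hv).existsUnique (b, d)
  refine ⟨p, ⟨hdeg, (hermiteData_eq_iff v).1 hp⟩, fun q ⟨hq, hdata⟩ => ?_⟩
  exact congrArg Subtype.val (hunique ⟨q, hq⟩ ((hermiteData_eq_iff v).2 hdata))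

end Hermite

section Primitive

theorem exists_derivative_eq {K : Type*} [DivisionSemiring K] [CharZero K] (q : K[X]) :
    ∃ P : K[X], derivative P = q := by
  induction q using Polynomial.induction_on' with
  | add p q hp hq =>
    obtain ⟨P, rfl⟩ := hp
    obtain ⟨Q, rfl⟩ := hq
    exact ⟨P + Q, derivative_add⟩
  | monomial n a =>
    refine ⟨monomial (n + 1) (a / (n + 1)), ?_⟩
    rw [derivative_monomial_succ, div_mul_cancel₀ _ n.cast_add_one_ne_zero]

theorem exists_derivative_eq_and_eval_eq_zero {K : Type*} [DivisionRing K] [CharZero K]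
    (q : K[X]) (c : K) : ∃ P : K[X], derivative P = q ∧ P.eval c = 0 := by
  obtain ⟨P, rfl⟩ := exists_derivative_eq q
  exact ⟨P - C (P.eval c), by simp, by simp⟩

theorem natDegree_derivative_le_iff_mem_degreeLT {R : Type*} [Semiring R] [IsAddTorsionFree R]
    {P : R[X]} {m : ℕ} : (derivative P).natDegree ≤ m ↔ P ∈ degreeLT R (m + 2) := by
  rw [natDegree_derivative, tsub_le_iff_right, natDegree_le_iff_degree_le,
    degreeLT_succ_eq_degreeLE, mem_degreeLE]

theorem intervalAverage_eval_derivative (P : ℝ[X]) (a b : ℝ) :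
    ⨍ s in a..b, (derivative P).eval s = (P.eval b - P.eval a) / (b - a) := by
  rw [interval_average_eq_div, integral_eq_sub_of_hasDerivAt (fun s _ => P.hasDerivAt s)
    ((derivative P).continuous.intervalIntegrable a b)]

end Primitive

theorem forall_eq_partialSum_iff {M : Type*} [AddMonoid M] {n : ℕ} {f : Fin (n + 1) → M}
    {d : Fin n → M} :
    (∀ j, f j = Fin.partialSum d j) ↔ f 0 = 0 ∧ ∀ i : Fin n, f i.succ = f i.castSucc + d i := by
  refine ⟨fun hf => ?_, fun ⟨hzero, hsucc⟩ j => ?_⟩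
  · simp [hf, Fin.partialSum_succ]
  · induction j using Fin.induction with
    | zero => rw [hzero, Fin.partialSum_zero]
    | succ i ih => rw [hsucc, ih, Fin.partialSum_succ]

theorem eval_eq_partialSum_iff_intervalAverage_derivative_eq {n : ℕ} {v : Fin (n + 1) → ℝ}
    (hv : v.Injective) {P : ℝ[X]} {A : Fin n → ℝ} :
    (∀ j, P.eval (v j) = Fin.partialSum (fun i => A i * (v i.succ - v i.castSucc)) j) ↔
      P.eval (v 0) = 0 ∧
        ∀ i : Fin n, ⨍ s in (v i.castSucc)..(v i.succ), (derivative P).eval s = A i := by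
  have width_ne_zero (i : Fin n) : v i.succ - v i.castSucc ≠ 0 :=
    sub_ne_zero.2 (hv.ne i.castSucc_lt_succ.ne')
  simp only [forall_eq_partialSum_iff (f := fun j => P.eval (v j)), intervalAverage_eval_derivative,
    div_eq_iff (width_ne_zero _), sub_eq_iff_eq_add']

theorem stmt_3_general {n : ℕ} {v : Fin (n + 1) → ℝ} (hv : v.Injective) (A : Fin n → ℝ)
    (a : Fin (n + 1) → ℝ) :
    ∃! q : ℝ[X], q.natDegree ≤ 2 * n ∧
      (∀ i : Fin n, ⨍ s in (v i.castSucc)..(v i.succ), q.eval s = A i) ∧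
      ∀ j, q.eval (v j) = a j := by
  obtain ⟨P, ⟨hdeg, hval, hder⟩, hunique⟩ := existsUnique_hermite_interpolant hv
    (Fin.partialSum fun i => A i * (v i.succ - v i.castSucc)) a
  rw [Fintype.card_fin, mul_add_one, ← natDegree_derivative_le_iff_mem_degreeLT] at hdeg
  have haverage := (eval_eq_partialSum_iff_intervalAverage_derivative_eq hv).1 hval
  refine ⟨derivative P, ⟨hdeg, haverage.2, hder⟩, fun q ⟨hqdeg, hqaverage, hqval⟩ => ?_⟩
  obtain ⟨Q, rfl, hQ⟩ := exists_derivative_eq_and_eval_eq_zero q (v 0)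
  refine congrArg derivative (hunique Q ⟨?_, ?_, hqval⟩)
  · rwa [Fintype.card_fin, mul_add_one, ← natDegree_derivative_le_iff_mem_degreeLT]
  · exact (eval_eq_partialSum_iff_intervalAverage_derivative_eq hv).2 ⟨hQ, hqaverage⟩

theorem one_div_mul_integral_eq_intervalAverage (f : ℝ → ℝ) {a b h : ℝ} (hab : b - a = h) :
    (1 / h) * ∫ s in a..b, f s = ⨍ s in a..b, f s := by
  rw [interval_average_eq_div, hab, one_div_mul_eq_div]

/-- Unisolvence of the CFWENO7 (r = 4) big-stencil Hermite–Birkhoff interpolation: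
three consecutive cell averages and four interface point values determine a
unique degree-6 polynomial. -/
theorem stmt_3 (h : ℝ) (hh : 0 < h) (x A B C a₀ a₁ a₂ a₃ : ℝ) :
    ∃! q : Polynomial ℝ, q.natDegree ≤ 6 ∧
      (1 / h) * ∫ s in (x - 2*h)..(x - h), q.eval s = A ∧
      (1 / h) * ∫ s in (x - h)..x, q.eval s = B ∧
      (1 / h) * ∫ s in x..(x + h), q.eval s = C ∧
      q.eval (x - 2*h) = a₀ ∧
      q.eval (x - h) = a₁ ∧
      q.eval x = a₂ ∧
      q.eval (x + h) = a₃ := by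
  have hnodes : StrictMono ![x - 2 * h, x - h, x, x + h] := by
    simp [hh, two_mul]
  simp only [one_div_mul_integral_eq_intervalAverage _ (show x - h - (x - 2 * h) = h by ring),
    one_div_mul_integral_eq_intervalAverage _ (sub_sub_cancel x h),
    one_div_mul_integral_eq_intervalAverage _ (add_sub_cancel_left x h)]
  simpa [Fin.forall_fin_succ, and_assoc] using
    stmt_3_general hnodes.injective ![A, B, C] ![a₀, a₁, a₂, a₃]
end

section
/- Fix a grid step h > 0, a reference point x ∈ ℝ, and real numbers a, b. Let p be the unique polynomial of degree at most 1 with p(x − h) = a and cell average b over [x − h, x]. Then for every real ν ≠ 0, the average (1/(νh))·∫_{x−νh}^{x} p(s) ds equals b + (1 − ν)·(b − a). -/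
open intervalIntegral

/-!
The midpoint rule is exact for affine functions. Hence the average of `p` over the cell `[x - h, x]`
is its value at `x - h / 2`, and the upstream average is its value at `x - ν * h / 2`. The latter
point has parameter `ν - 1` on the line from `x - h / 2` to `x - h`, so `p`, being affine, sends it
to the point with parameter `ν - 1` on the line from `b` to `a`.
-/

section AffineMap

variable {E : Type*} [NormedAddCommGroup E] [NormedSpace ℝ E] [CompleteSpace E] (f : ℝ →ᵃ[ℝ] E)

theorem integral_affineMap_eq_smul_midpoint (u v : ℝ) :
    ∫ s in u..v, f s = (v - u) • f (midpoint ℝ u v) := by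
  have hf : Continuous f := f.continuous_of_finiteDimensional
  have reflect_integral : ∫ s in u..v, f (u + v - s) = ∫ s in u..v, f s := by
    rw [integral_comp_sub_left (fun s ↦ f s), add_sub_cancel_right, add_sub_cancel_left]
  have add_reflect (s : ℝ) : f s + f (u + v - s) = (2 : ℝ) • f (midpoint ℝ u v) := by
    have midpoint_reflect : midpoint ℝ s (u + v - s) = midpoint ℝ u v := by
      rw [midpoint_eq_midpoint_iff_vsub_eq_vsub, vsub_eq_sub, vsub_eq_sub]
      ring
    rw [← midpoint_reflect, f.map_midpoint, two_smul, midpoint_add_self]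
  refine smul_right_injective E (two_ne_zero' ℝ) ?_
  calc (2 : ℝ) • ∫ s in u..v, f s
      = (∫ s in u..v, f s) + ∫ s in u..v, f (u + v - s) := by rw [reflect_integral, two_smul]
    _ = ∫ s in u..v, (f s + f (u + v - s)) :=
      (integral_add (hf.intervalIntegrable u v)
        ((hf.comp (continuous_sub_left (u + v))).intervalIntegrable u v)).symm
    _ = (2 : ℝ) • (v - u) • f (midpoint ℝ u v) := by
      simp only [add_reflect, integral_const, smul_comm (v - u)]

theorem average_affineMap_eq_apply_sub_half (x : ℝ) {k : ℝ} (hk : k ≠ 0) :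
    (1 / k) • ∫ s in (x - k)..x, f s = f (x - k / 2) := by
  have midpoint_cell : midpoint ℝ (x - k) x = x - k / 2 := by
    rw [midpoint_eq_smul_add, smul_eq_mul, invOf_eq_inv]
    ring
  rw [integral_affineMap_eq_smul_midpoint, midpoint_cell, sub_sub_cancel, one_div,
    inv_smul_smul₀ hk]

theorem stmt_4_general {h x : ℝ} (hh : h ≠ 0) {a b : E} (hfa : f (x - h) = a)
    (hfb : (1 / h) • ∫ s in (x - h)..x, f s = b) {ν : ℝ} (hν : ν ≠ 0) :
    (1 / (ν * h)) • ∫ s in (x - ν * h)..x, f s = b + (1 - ν) • (b - a) := by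
  rw [average_affineMap_eq_apply_sub_half f x hh] at hfb
  calc (1 / (ν * h)) • ∫ s in (x - ν * h)..x, f s
      = f (x - ν * h / 2) := average_affineMap_eq_apply_sub_half f x (mul_ne_zero hν hh)
    _ = f (AffineMap.lineMap (x - h / 2) (x - h) (ν - 1)) := by
      rw [AffineMap.lineMap_apply_ring']
      ring_nf
    _ = AffineMap.lineMap b a (ν - 1) := by rw [f.apply_lineMap, hfa, hfb]
    _ = b + (1 - ν) • (b - a) := by
      rw [AffineMap.lineMap_apply_module']
      module

end AffineMap

theorem exists_affineMap_eq_eval_of_natDegree_le_one {R : Type*} [CommRing R] {p : Polynomial R}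
    (hp : p.natDegree ≤ 1) : ∃ f : R →ᵃ[R] R, ∀ s, p.eval s = f s := by
  obtain ⟨d, c, rfl⟩ := Polynomial.exists_eq_X_add_C_of_natDegree_le_one hp
  refine ⟨AffineMap.lineMap c (d + c), fun s ↦ ?_⟩
  rw [AffineMap.lineMap_apply_ring', add_sub_cancel_right, mul_comm s d]
  simp only [Polynomial.eval_add, Polynomial.eval_mul, Polynomial.eval_C, Polynomial.eval_X]

/-- CFWENO3 sub-stencil initial value reconstruction ū₀² (formula A1). -/
theorem stmt_4 (h : ℝ) (hh : 0 < h) (x a b : ℝ)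
    (p : Polynomial ℝ) (hdeg : p.natDegree ≤ 1)
    (hpa : p.eval (x - h) = a)
    (hpb : (1 / h) * ∫ s in (x - h)..x, p.eval s = b) :
    ∀ ν : ℝ, ν ≠ 0 →
      (1 / (ν * h)) * ∫ s in (x - ν * h)..x, p.eval s
        = b + (1 - ν) * (b - a) := by
  obtain ⟨f, hf⟩ := exists_affineMap_eq_eval_of_natDegree_le_one hdeg
  simp only [hf] at hpa hpb ⊢
  exact fun ν hν ↦ stmt_4_general f hh.ne' hpa hpb hν
end

section
/- Fix a grid step h > 0, a reference point x ∈ ℝ, and real numbers a, b, c. Let q be the unique polynomial of degree at most 2 with q(x − h) = a, cell average b over [x − h, x], and q(x) = c. Then for every real ν ≠ 0, the average (1/(νh))·∫_{x−νh}^{x} q(s) ds equals b + (1 − ν)·(c − b) − ν·(1 − ν)·(a − 2b + c). -/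
open intervalIntegral

/-! Rescale by `s = x - h * t`, so that `q` becomes a quadratic `p` in `t` with `p 0 = c`, `p 1 = a`
and mean `b` over `[0, 1]`. The mean of `t ^ i` over `[0, ν]` is `ν ^ i / (i + 1)`, so if
`p = p₀ + p₁ t + p₂ t²` then its mean over `[0, ν]` is `p₀ + (p₁ / 2) ν + (p₂ / 3) ν²`. The data
give `p₀ = c`, `p₁ / 2 + p₂ / 3 = b - c` and `p₂ / 3 = a - 2 b + c`. -/

open Polynomial

theorem inv_smul_integral_sub_left_eq_integral_zero_one {E : Type*} [NormedAddCommGroup E]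
    [NormedSpace ℝ E] (f : ℝ → E) {l : ℝ} (hl : l ≠ 0) (x : ℝ) :
    l⁻¹ • ∫ s in (x - l)..x, f s = ∫ t in (0 : ℝ)..1, f (x - l * t) := by
  rw [integral_comp_sub_mul f hl, mul_one, mul_zero, sub_zero]

theorem integral_eval_mul_eq_sum_range {p : ℝ[X]} {n : ℕ} (hn : p.natDegree < n) (ν : ℝ) :
    ∫ t in (0 : ℝ)..1, p.eval (ν * t) = ∑ i ∈ Finset.range n, p.coeff i / (i + 1) * ν ^ i := by
  simp only [eval_eq_sum_range' hn, mul_pow]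
  rw [integral_finsetSum fun i _ => Continuous.intervalIntegrable (by fun_prop) 0 1]
  refine Finset.sum_congr rfl fun i _ => ?_
  rw [integral_const_mul, integral_const_mul, integral_pow, one_pow, zero_pow i.succ_ne_zero]
  ring

theorem integral_eval_mul_of_natDegree_le_two {p : ℝ[X]} (hp : p.natDegree ≤ 2) (ν : ℝ) :
    ∫ t in (0 : ℝ)..1, p.eval (ν * t) =
      (∫ t in (0 : ℝ)..1, p.eval t) + (1 - ν) * (p.eval 0 - ∫ t in (0 : ℝ)..1, p.eval t) -
        ν * (1 - ν) * (p.eval 1 - 2 * (∫ t in (0 : ℝ)..1, p.eval t) + p.eval 0) := by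
  have hp' : p.natDegree < 3 := Nat.lt_succ_of_le hp
  have mean (μ : ℝ) : ∫ t in (0 : ℝ)..1, p.eval (μ * t) =
      p.coeff 0 + p.coeff 1 / 2 * μ + p.coeff 2 / 3 * μ ^ 2 := by
    rw [integral_eval_mul_eq_sum_range hp']
    norm_num [Finset.sum_range_succ]
  have mean_one : ∫ t in (0 : ℝ)..1, p.eval t = p.coeff 0 + p.coeff 1 / 2 + p.coeff 2 / 3 := by
    simpa using mean 1
  have eval_zero : p.eval 0 = p.coeff 0 := (coeff_zero_eq_eval_zero p).symm
  have eval_one : p.eval 1 = p.coeff 0 + p.coeff 1 + p.coeff 2 := by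
    simp [eval_eq_sum_range' hp', Finset.sum_range_succ]
  rw [mean, mean_one, eval_zero, eval_one]
  ring

/-- CFWENO3 big-stencil initial value reconstruction ū² (formula A1). -/
theorem stmt_5 (h : ℝ) (hh : 0 < h) (x a b c : ℝ)
    (q : Polynomial ℝ) (hdeg : q.natDegree ≤ 2)
    (hqa : q.eval (x - h) = a)
    (hqb : (1 / h) * ∫ s in (x - h)..x, q.eval s = b)
    (hqc : q.eval x = c) :
    ∀ ν : ℝ, ν ≠ 0 →
      (1 / (ν * h)) * ∫ s in (x - ν * h)..x, q.eval s
        = b + (1 - ν) * (c - b) - ν * (1 - ν) * (a - 2*b + c) := by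
  intro ν hν
  let p : ℝ[X] := q.comp (C x - C h * X)
  have eval_p (t : ℝ) : p.eval t = q.eval (x - h * t) := by simp [p]
  have p_natDegree : p.natDegree ≤ 2 :=
    natDegree_comp_le.trans (Nat.mul_le_mul hdeg (by compute_degree : _ ≤ 1))
  have average_eq (μ : ℝ) (hμ : μ ≠ 0) :
      (1 / (μ * h)) * ∫ s in (x - μ * h)..x, q.eval s = ∫ t in (0 : ℝ)..1, p.eval (μ * t) := by
    rw [one_div, ← smul_eq_mul,
      inv_smul_integral_sub_left_eq_integral_zero_one _ (mul_ne_zero hμ hh.ne')]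
    simp only [eval_p, mul_assoc, mul_left_comm]
  have p_zero : p.eval 0 = c := by rw [eval_p, mul_zero, sub_zero, hqc]
  have p_one : p.eval 1 = a := by rw [eval_p, mul_one, hqa]
  have p_mean : ∫ t in (0 : ℝ)..1, p.eval t = b := by
    simpa only [one_mul, hqb] using (average_eq 1 one_ne_zero).symm
  rw [average_eq ν hν, integral_eval_mul_of_natDegree_le_two p_natDegree, p_zero, p_one, p_mean]
end

section
/- Fix a grid step h > 0, a reference point x ∈ ℝ, and real numbers A, a, B. Let p be the unique polynomial of degree at most 2 whose cell averages over [x − 2h, x − h] and [x − h, x] equal A and B respectively and which satisfies p(x − h) = a (this interpolation problem has exactly one solution). Then for every real ν ≠ 0, the average (1/(νh))·∫_{x−νh}^{x} p(s) ds equals B + (1 − ν)·(B − a) + ((1 − ν)²/2)·(A − 2a + B). -/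
open intervalIntegral

/-!
Expand the interpolant about the interior node `c = x - h`, say `p (c + t) = a + b t + d t ^ 2`.
Its average over `[c + t₁, c + t₂]` is `a + b (t₁ + t₂) / 2 + d (t₁² + t₁ t₂ + t₂²) / 3`.
The stencil averages correspond to `(t₁, t₂) = (-h, 0)` and `(0, h)`, so that
`B - a = b h / 2 + d h² / 3` and `A - 2 a + B = 2 d h² / 3`.
The upstream average corresponds to `(t₁, t₂) = (θ h, h)` with `θ = 1 - ν`; ordered by powers of
`θ`, its coefficients are `B`, `B - a` and `(A - 2 a + B) / 2`.
-/

open MeasureTheory Polynomial Finset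

theorem one_div_mul_integral_eq_intervalAverage_s6 (f : ℝ → ℝ) {u v w : ℝ} (hw : v - u = w) :
    (1 / w) * ∫ s in u..v, f s = ⨍ s in u..v, f s := by
  rw [interval_average_eq_div, hw, one_div_mul_eq_div]

theorem intervalAverage_comp_add_right {E : Type*} [NormedAddCommGroup E] [NormedSpace ℝ E]
    (f : ℝ → E) (u v c : ℝ) :
    ⨍ s in u..v, f (s + c) = ⨍ s in (u + c)..(v + c), f s := by
  simp only [interval_average_eq, integral_comp_add_right, add_sub_add_right_eq_sub]

theorem integral_polynomial_eval {p : ℝ[X]} {n : ℕ} (hn : p.natDegree < n) (u v : ℝ) :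
    ∫ s in u..v, p.eval s =
      ∑ i ∈ range n, p.coeff i * ((v ^ (i + 1) - u ^ (i + 1)) / (i + 1)) := by
  simp_rw [eval_eq_sum_range' hn]
  rw [integral_finsetSum fun i _ ↦ Continuous.intervalIntegrable (by fun_prop) u v]
  simp only [intervalIntegral.integral_const_mul, integral_pow]

theorem intervalAverage_polynomial_eval {p : ℝ[X]} {n : ℕ} (hn : p.natDegree < n) {u v : ℝ}
    (huv : u ≠ v) :
    ⨍ s in u..v, p.eval s =
      ∑ i ∈ range n, p.coeff i * ((∑ j ∈ range (i + 1), v ^ j * u ^ (i - j)) / (i + 1)) := by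
  rw [interval_average_eq_div, integral_polynomial_eval hn, sum_div]
  refine sum_congr rfl fun i _ ↦ ?_
  rw [← (Commute.all v u).geom_sum₂_mul (i + 1), Nat.add_sub_cancel]
  have hvu : v - u ≠ 0 := sub_ne_zero.mpr huv.symm
  field_simp

theorem intervalAverage_polynomial_eval_eq_sum_taylor {p : ℝ[X]} {n : ℕ} (hn : p.natDegree < n)
    (c : ℝ) {u v : ℝ} (huv : u ≠ v) :
    ⨍ s in u..v, p.eval s =
      ∑ i ∈ range n, (taylor c p).coeff i *
        ((∑ j ∈ range (i + 1), (v - c) ^ j * (u - c) ^ (i - j)) / (i + 1)) := by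
  have hshift : u - c ≠ v - c := by simpa using huv
  rw [← intervalAverage_polynomial_eval (by rwa [natDegree_taylor]) hshift]
  simp only [taylor_eval, intervalAverage_comp_add_right p.eval, sub_add_cancel]

theorem intervalAverage_polynomial_eval_of_natDegree_le_two {p : ℝ[X]} (hp : p.natDegree ≤ 2)
    (c : ℝ) {u v : ℝ} (huv : u ≠ v) :
    ⨍ s in u..v, p.eval s =
      p.eval c + (taylor c p).coeff 1 * (((u - c) + (v - c)) / 2) +
        (taylor c p).coeff 2 * (((u - c) ^ 2 + (u - c) * (v - c) + (v - c) ^ 2) / 3) := by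
  rw [intervalAverage_polynomial_eval_eq_sum_taylor (Nat.lt_succ_of_le hp) c huv]
  simp only [sum_range_succ, sum_range_zero, taylor_coeff_zero, Nat.reduceSub]
  push_cast
  ring

/-- Leftmost CFWENO5 sub-stencil initial value reconstruction ū₀³ (formula A2). -/
theorem stmt_6 (h : ℝ) (hh : 0 < h) (x A a B : ℝ)
    (p : Polynomial ℝ) (hdeg : p.natDegree ≤ 2)
    (hpA : (1 / h) * ∫ s in (x - 2*h)..(x - h), p.eval s = A)
    (hpB : (1 / h) * ∫ s in (x - h)..x, p.eval s = B)
    (hpa : p.eval (x - h) = a) :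
    ∀ ν : ℝ, ν ≠ 0 →
      (1 / (ν * h)) * ∫ s in (x - ν * h)..x, p.eval s
        = B + (1 - ν) * (B - a) + ((1 - ν)^2 / 2) * (A - 2*a + B) := by
  intro ν hν
  set b := (taylor (x - h) p).coeff 1
  set d := (taylor (x - h) p).coeff 2
  have average_eq {u v w : ℝ} (hw : v - u = w) (hw0 : w ≠ 0) :
      (1 / w) * ∫ s in u..v, p.eval s =
        a + b * (((u - (x - h)) + (v - (x - h))) / 2) +
          d * (((u - (x - h)) ^ 2 + (u - (x - h)) * (v - (x - h)) + (v - (x - h)) ^ 2) / 3) := by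
    have huv : u ≠ v := (sub_ne_zero.mp (hw ▸ hw0)).symm
    rw [one_div_mul_integral_eq_intervalAverage_s6 _ hw,
      intervalAverage_polynomial_eval_of_natDegree_le_two hdeg (x - h) huv, hpa]
  have hB : B - a = b * h / 2 + d * h ^ 2 / 3 := by
    rw [← hpB, average_eq (by ring) hh.ne']
    ring
  have hAB : A - 2 * a + B = 2 * d * h ^ 2 / 3 := by
    rw [← hpA, ← hpB, average_eq (by ring) hh.ne', average_eq (by ring) hh.ne']
    ring
  rw [average_eq (by ring) (mul_ne_zero hν hh.ne'), hAB, hB, sub_eq_iff_eq_add.mp hB]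
  ring
end

section
/- Fix a grid step h > 0, a reference point x ∈ ℝ, and real numbers A, a, B, c, C. Let q be the unique polynomial of degree at most 4 whose cell averages over [x − 2h, x − h], [x − h, x], [x, x + h] equal A, B, C and which satisfies q(x − h) = a and q(x) = c. Then for every real ν ≠ 0, the average (1/(νh))·∫_{x−νh}^{x} q(s) ds equals B + (1 − ν)(c − B) − (ν(1 − ν)/2)(B − 2c + C) − (ν(1 − ν)(1 + ν)/4)(2a − 5B + 4c − C) − (ν(1 − ν)²(1 + ν)/12)(−A + 6a − 10B + 6c − C). -/
open intervalIntegral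

/-!
Put `u(ν) = (1/(νh)) ∫_{x-νh}^x q`. Then `u` is a polynomial in `ν` of degree at most `deg q ≤ 4`,
and the data on `q` become Hermite data for `u`: the cell averages give `u(-1) = C`, `u(1) = B`,
`2 u(2) - u(1) = A`, and since `(ν u(ν))' = q(x - νh)`, the point values give `u(0) = c` and
`u(1) + u'(1) = a`. The formula is the Newton form of the Hermite interpolant of `u` at the
nodes `1, 0, -1, 1, 2`, taken in this order.
-/

section UpstreamMean

open Polynomial

variable {K : Type*} [Field K]

/-- The polynomial `t ↦ (1/t) ∫₀ᵗ p`. It is defined through its coefficients, so that its value at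
`0` is the limit `p(0)` rather than a division by zero. -/
noncomputable def runningMean (p : K[X]) : K[X] :=
  p.sum fun n a ↦ monomial n (a / (n + 1))

theorem coeff_runningMean (p : K[X]) (n : ℕ) :
    (runningMean p).coeff n = p.coeff n / (n + 1) := by
  simp +contextual [runningMean, sum_def, coeff_monomial]

theorem natDegree_runningMean_le (p : K[X]) : (runningMean p).natDegree ≤ p.natDegree :=
  natDegree_le_iff_coeff_eq_zero.mpr fun n hn ↦ by
    rw [coeff_runningMean, coeff_eq_zero_of_natDegree_lt hn, zero_div]

theorem derivative_X_mul_runningMean [CharZero K] (p : K[X]) :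
    derivative (X * runningMean p) = p := by
  ext n
  rw [coeff_derivative, coeff_X_mul, coeff_runningMean, div_mul_cancel₀ _ n.cast_add_one_ne_zero]

theorem integral_eval_eq_mul_runningMean_sub (p : ℝ[X]) (a b : ℝ) :
    ∫ t in a..b, p.eval t = b * (runningMean p).eval b - a * (runningMean p).eval a := by
  have hasDerivAt_mul_mean (t : ℝ) :
      HasDerivAt (fun t ↦ t * (runningMean p).eval t) (p.eval t) t := by
    have := (X * runningMean p).hasDerivAt t
    simpa only [derivative_X_mul_runningMean, eval_mul, eval_X] using this
  exact integral_eq_sub_of_hasDerivAt (fun t _ ↦ hasDerivAt_mul_mean t)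
    (p.continuous.intervalIntegrable a b)

/-- The polynomial `ν ↦ (1/(νh)) ∫_{x-νh}^x q`, the average of `q` over the `ν` cells of width `h`
upstream of `x`; the cell count `ν` need be neither an integer nor positive. -/
noncomputable def upstreamMean (q : K[X]) (x h : K) : K[X] :=
  runningMean (q.comp (C x - C h * X))

theorem natDegree_upstreamMean_le (q : K[X]) (x h : K) :
    (upstreamMean q x h).natDegree ≤ q.natDegree :=
  calc (upstreamMean q x h).natDegree
    _ ≤ (q.comp (C x - C h * X)).natDegree := natDegree_runningMean_le _
    _ ≤ q.natDegree * (C x - C h * X).natDegree := natDegree_comp_le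
    _ ≤ q.natDegree := mul_le_of_le_one_right' (by compute_degree)

theorem eval_upstreamMean_add_mul_eval_derivative [CharZero K] (q : K[X]) (x h ν : K) :
    (upstreamMean q x h).eval ν + ν * (derivative (upstreamMean q x h)).eval ν =
      q.eval (x - h * ν) := by
  have := congrArg (eval ν) (derivative_X_mul_runningMean (q.comp (C x - C h * X)))
  simpa [upstreamMean, derivative_mul] using this

theorem integral_eval_eq_mul_upstreamMean_sub (q : ℝ[X]) (x h μ ν : ℝ) :
    ∫ s in (x - ν * h)..(x - μ * h), q.eval s =
      h * (ν * (upstreamMean q x h).eval ν - μ * (upstreamMean q x h).eval μ) :=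
  calc ∫ s in (x - ν * h)..(x - μ * h), q.eval s
    _ = h * ∫ t in μ..ν, q.eval (x - h * t) := by
      rw [mul_integral_comp_sub_mul (f := fun s ↦ q.eval s), mul_comm h, mul_comm h]
    _ = h * ∫ t in μ..ν, (q.comp (C x - C h * X)).eval t := by
      simp only [eval_comp, eval_sub, eval_mul, eval_C, eval_X]
    _ = _ := by rw [integral_eval_eq_mul_runningMean_sub, upstreamMean]

/-- The coefficients are the divided differences of `u` at the nodes `1, 0, -1, 1, 2`. -/
theorem eval_eq_newton_of_natDegree_le_four [CharZero K] {u : K[X]}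
    (hu : u.natDegree ≤ 4) (t : K) :
    u.eval t = u.eval 1 + (t - 1) * (u.eval 1 - u.eval 0)
      + (t - 1) * t * ((u.eval 1 - 2 * u.eval 0 + u.eval (-1)) / 2)
      + (t - 1) * t * (t + 1) *
        ((2 * (derivative u).eval 1 - 3 * u.eval 1 + 4 * u.eval 0 - u.eval (-1)) / 4)
      + (t - 1) ^ 2 * t * (t + 1) *
        ((2 * u.eval 2 - 6 * (derivative u).eval 1 + 3 * u.eval 1 - 6 * u.eval 0
          + u.eval (-1)) / 12) := by
  have eval_u (s : K) : u.eval s = u.coeff 0 + u.coeff 1 * s + u.coeff 2 * s ^ 2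
      + u.coeff 3 * s ^ 3 + u.coeff 4 * s ^ 4 := by
    simp [eval_eq_sum_range' (Nat.lt_succ_of_le hu), Finset.sum_range_succ]
  have eval_derivative_one : (derivative u).eval 1 =
      u.coeff 1 + 2 * u.coeff 2 + 3 * u.coeff 3 + 4 * u.coeff 4 := by
    have hu' : (derivative u).natDegree < 4 := by
      have := natDegree_derivative_le u
      lia
    simp only [eval_eq_sum_range' hu', Finset.sum_range_succ, coeff_derivative]
    norm_num
    ring
  simp only [eval_derivative_one, eval_u]
  field_simp
  ring

end UpstreamMean

/-- CFWENO5 big-stencil initial value reconstruction ū⁵ (formula A2). -/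
theorem stmt_7 (h : ℝ) (hh : 0 < h) (x A a B c C : ℝ)
    (q : Polynomial ℝ) (hdeg : q.natDegree ≤ 4)
    (hqA : (1 / h) * ∫ s in (x - 2*h)..(x - h), q.eval s = A)
    (hqB : (1 / h) * ∫ s in (x - h)..x, q.eval s = B)
    (hqC : (1 / h) * ∫ s in x..(x + h), q.eval s = C)
    (hqa : q.eval (x - h) = a)
    (hqc : q.eval x = c) :
    ∀ ν : ℝ, ν ≠ 0 →
      (1 / (ν * h)) * ∫ s in (x - ν * h)..x, q.eval s
        = B + (1 - ν) * (c - B)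
          - (ν * (1 - ν) / 2) * (B - 2*c + C)
          - (ν * (1 - ν) * (1 + ν) / 4) * (2*a - 5*B + 4*c - C)
          - (ν * (1 - ν)^2 * (1 + ν) / 12) * (-A + 6*a - 10*B + 6*c - C) := by
  intro ν hν
  set u := upstreamMean q x h
  have integral_eq (μ ν : ℝ) : (1 / h) * ∫ s in (x - ν * h)..(x - μ * h), q.eval s =
      ν * u.eval ν - μ * u.eval μ := by
    rw [integral_eval_eq_mul_upstreamMean_sub, one_div, inv_mul_cancel_left₀ hh.ne']
  have hA : 2 * u.eval 2 - u.eval 1 = A := by simpa [← hqA] using (integral_eq 1 2).symm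
  have hB : u.eval 1 = B := by simpa [← hqB] using (integral_eq 0 1).symm
  have hC : u.eval (-1) = C := by simpa [← hqC] using (integral_eq (-1) 0).symm
  have ha : u.eval 1 + u.derivative.eval 1 = a := by
    simpa [hqa] using eval_upstreamMean_add_mul_eval_derivative q x h 1
  have hc : u.eval 0 = c := by
    simpa [hqc] using eval_upstreamMean_add_mul_eval_derivative q x h 0
  have hν_mean : (1 / (ν * h)) * ∫ s in (x - ν * h)..x, q.eval s = u.eval ν := by
    have := integral_eq 0 ν
    simp only [zero_mul, sub_zero] at this
    rw [← one_div_mul_one_div, mul_assoc, this, one_div, inv_mul_cancel_left₀ hν]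
  rw [hν_mean, eval_eq_newton_of_natDegree_le_four ((natDegree_upstreamMean_le q x h).trans hdeg),
    ← hA, ← hB, ← hC, ← ha, ← hc]
  ring
end

section
/- Fix a grid step h > 0, a reference point x ∈ ℝ, real numbers a, b, c, and a real ν ≠ 0. Let p₀ be the unique polynomial of degree ≤ 1 with p₀(x − h) = a and cell average b over [x − h, x]; let p₁ be the unique polynomial of degree ≤ 1 with cell average b over [x − h, x] and p₁(x) = c; and let q be the unique polynomial of degree ≤ 2 with q(x − h) = a, cell average b over [x − h, x], and q(x) = c. Then (1/(νh))·∫_{x−νh}^{x} q = ν·(1/(νh))·∫_{x−νh}^{x} p₀ + (1 − ν)·(1/(νh))·∫_{x−νh}^{x} p₁. -/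
open intervalIntegral

/-!
If two polynomials of degree at most two agree at an endpoint `u` and have the same integral over
`[u, v]`, the primitive of their difference is a cubic with a double root at `u` and a simple root
at `v`, hence determined by its leading coefficient. Between `q` and `p₀` this primitive is a
multiple of `(y - u)² (y - v)`, and between `q` and `p₁` it is the same multiple of
`(y - u) (y - v)²`. The two errors therefore cancel when they are weighted by the barycentric
coordinates of `y` in `[u, v]`; for `u = x - h`, `v = x`, `y = x - ν h` these are `ν` and `1 - ν`.
-/

section

open Polynomial

theorem integral_eval_eq_sum_taylor_coeff (p : ℝ[X]) {n : ℕ} (hp : p.natDegree < n) (u y : ℝ) :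
    ∫ s in u..y, p.eval s =
      ∑ k ∈ Finset.range n, (taylor u p).coeff k * ((y - u) ^ (k + 1) / (k + 1)) := by
  have eval_eq (s : ℝ) :
      p.eval s = ∑ k ∈ Finset.range n, (taylor u p).coeff k * (s - u) ^ k := by
    rw [← taylor_eval_sub u p s, eval_eq_sum_range' (by rwa [natDegree_taylor])]
  have integral_sub_pow (k : ℕ) : ∫ s in u..y, (s - u) ^ k = (y - u) ^ (k + 1) / (k + 1) := by
    rw [integral_comp_sub_right (fun s => s ^ k), integral_pow, sub_self,
      zero_pow k.succ_ne_zero, sub_zero]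
  calc ∫ s in u..y, p.eval s
      = ∫ s in u..y, ∑ k ∈ Finset.range n, (taylor u p).coeff k * (s - u) ^ k := by
        simp only [eval_eq]
    _ = ∑ k ∈ Finset.range n, ∫ s in u..y, (taylor u p).coeff k * (s - u) ^ k :=
        integral_finsetSum fun k _ => Continuous.intervalIntegrable (by fun_prop) u y
    _ = ∑ k ∈ Finset.range n, (taylor u p).coeff k * ((y - u) ^ (k + 1) / (k + 1)) := by
        simp only [integral_const_mul, integral_sub_pow]

theorem coeff_taylor_of_natDegree_le {R : Type*} [Semiring R] (r : R) {p : R[X]} {n : ℕ}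
    (hp : p.natDegree ≤ n) : (taylor r p).coeff n = p.coeff n := by
  rcases hp.eq_or_lt with rfl | hlt
  · exact coeff_taylor_natDegree r p
  · rw [coeff_eq_zero_of_natDegree_lt hlt,
      coeff_eq_zero_of_natDegree_lt (by rwa [natDegree_taylor])]

theorem integral_eval_of_eval_eq_zero_of_integral_eq_zero {p : ℝ[X]} (hp : p.natDegree ≤ 2)
    {u v : ℝ} (huv : u ≠ v) (hu : p.eval u = 0) (h_int : ∫ s in u..v, p.eval s = 0) (y : ℝ) :
    ∫ s in u..y, p.eval s = p.coeff 2 / 3 * ((y - u) ^ 2 * (y - v)) := by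
  have coeff_two : (taylor u p).coeff 2 = p.coeff 2 :=
    coeff_taylor_of_natDegree_le u hp
  have integral_eq (z : ℝ) : ∫ s in u..z, p.eval s =
      (z - u) ^ 2 * ((taylor u p).coeff 1 / 2 + p.coeff 2 / 3 * (z - u)) := by
    rw [integral_eval_eq_sum_taylor_coeff p (Nat.lt_succ_of_le hp)]
    simp only [Finset.sum_range_succ, Finset.sum_range_zero, taylor_coeff_zero, hu, coeff_two]
    push_cast
    ring
  have coeff_one : (taylor u p).coeff 1 / 2 + p.coeff 2 / 3 * (v - u) = 0 := by
    rw [integral_eq] at h_int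
    exact (mul_eq_zero.mp h_int).resolve_left (pow_ne_zero 2 (sub_ne_zero.mpr huv.symm))
  rw [integral_eq]
  linear_combination (y - u) ^ 2 * coeff_one

theorem integral_eval_sub_of_eval_eq_of_integral_eq {p q : ℝ[X]} (hp : p.natDegree ≤ 1)
    (hq : q.natDegree ≤ 2) {u v : ℝ} (huv : u ≠ v) (hu : q.eval u = p.eval u)
    (h_int : ∫ s in u..v, q.eval s = ∫ s in u..v, p.eval s) (y : ℝ) :
    (∫ s in u..y, q.eval s) - ∫ s in u..y, p.eval s =
      q.coeff 2 / 3 * ((y - u) ^ 2 * (y - v)) := by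
  have integral_sub_eq (z : ℝ) : ∫ s in u..z, (q - p).eval s =
      (∫ s in u..z, q.eval s) - ∫ s in u..z, p.eval s := by
    simp only [eval_sub]
    exact integral_sub (q.continuous.intervalIntegrable u z) (p.continuous.intervalIntegrable u z)
  have coeff_two : (q - p).coeff 2 = q.coeff 2 := by
    rw [coeff_sub, coeff_eq_zero_of_natDegree_lt (p := p) (by omega), sub_zero]
  rw [← integral_sub_eq, ← coeff_two]
  refine integral_eval_of_eval_eq_zero_of_integral_eq_zero
    (natDegree_sub_le_of_le hq (hp.trans one_le_two)) huv ?_ ?_ y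
  · rw [eval_sub, hu, sub_self]
  · rw [integral_sub_eq, h_int, sub_self]

theorem sub_mul_integral_eval_eq_barycentric {p₀ p₁ q : ℝ[X]} (hp₀ : p₀.natDegree ≤ 1)
    (hp₁ : p₁.natDegree ≤ 1) (hq : q.natDegree ≤ 2) {u v : ℝ} (huv : u ≠ v)
    (hu : q.eval u = p₀.eval u) (hv : q.eval v = p₁.eval v)
    (h_int₀ : ∫ s in u..v, q.eval s = ∫ s in u..v, p₀.eval s)
    (h_int₁ : ∫ s in u..v, q.eval s = ∫ s in u..v, p₁.eval s) (y : ℝ) :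
    (v - u) * ∫ s in y..v, q.eval s =
      (v - y) * (∫ s in y..v, p₀.eval s) + (y - u) * ∫ s in y..v, p₁.eval s := by
  have split (r : ℝ[X]) :
      (∫ s in u..y, r.eval s) + ∫ s in y..v, r.eval s = ∫ s in u..v, r.eval s :=
    integral_add_adjacent_intervals (r.continuous.intervalIntegrable u y)
      (r.continuous.intervalIntegrable y v)
  have error₀ : (∫ s in y..v, q.eval s) - ∫ s in y..v, p₀.eval s =
      q.coeff 2 / 3 * ((y - u) ^ 2 * (v - y)) := by
    linear_combination split q - split p₀ + h_int₀ -
      integral_eval_sub_of_eval_eq_of_integral_eq hp₀ hq huv hu h_int₀ y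
  have error₁ : (∫ s in y..v, q.eval s) - ∫ s in y..v, p₁.eval s =
      -(q.coeff 2 / 3 * ((v - y) ^ 2 * (y - u))) := by
    have h_int₁' : ∫ s in v..u, q.eval s = ∫ s in v..u, p₁.eval s := by
      rw [integral_symm u v, integral_symm u v, h_int₁]
    rw [integral_symm v y, integral_symm v y]
    linear_combination
      -integral_eval_sub_of_eval_eq_of_integral_eq hp₁ hq huv.symm hv h_int₁' y
  linear_combination (v - y) * error₀ + (y - u) * error₁

end

/-- Optimal linear weight identity of Table 1 for r = 2: the big-stencil average
reconstruction equals the combination of sub-stencil average reconstructions with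
weights γ̄₀ = ν and γ̄₁ = 1 − ν. -/
theorem stmt_8 (h : ℝ) (hh : 0 < h) (x a b c ν : ℝ) (hν : ν ≠ 0)
    (p₀ : Polynomial ℝ) (hdeg₀ : p₀.natDegree ≤ 1)
    (hp₀a : p₀.eval (x - h) = a)
    (hp₀b : (1 / h) * ∫ s in (x - h)..x, p₀.eval s = b)
    (p₁ : Polynomial ℝ) (hdeg₁ : p₁.natDegree ≤ 1)
    (hp₁b : (1 / h) * ∫ s in (x - h)..x, p₁.eval s = b)
    (hp₁c : p₁.eval x = c)
    (q : Polynomial ℝ) (hdegq : q.natDegree ≤ 2)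
    (hqa : q.eval (x - h) = a)
    (hqb : (1 / h) * ∫ s in (x - h)..x, q.eval s = b)
    (hqc : q.eval x = c) :
    (1 / (ν * h)) * ∫ s in (x - ν * h)..x, q.eval s
      = ν * ((1 / (ν * h)) * ∫ s in (x - ν * h)..x, p₀.eval s)
        + (1 - ν) * ((1 / (ν * h)) * ∫ s in (x - ν * h)..x, p₁.eval s) := by
  have same_integral {p : Polynomial ℝ} (hp : (1 / h) * ∫ s in (x - h)..x, p.eval s = b) :
      ∫ s in (x - h)..x, q.eval s = ∫ s in (x - h)..x, p.eval s :=
    mul_left_cancel₀ (one_div_ne_zero hh.ne') (hqb.trans hp.symm)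
  have barycentric := sub_mul_integral_eval_eq_barycentric hdeg₀ hdeg₁ hdegq
    (sub_lt_self x hh).ne (hqa.trans hp₀a.symm) (hqc.trans hp₁c.symm)
    (same_integral hp₀b) (same_integral hp₁b) (x - ν * h)
  have integral_eq : ∫ s in (x - ν * h)..x, q.eval s =
      ν * (∫ s in (x - ν * h)..x, p₀.eval s) + (1 - ν) * ∫ s in (x - ν * h)..x, p₁.eval s :=
    mul_left_cancel₀ hh.ne' (by linear_combination barycentric)
  rw [integral_eq]
  ring
end

section
/- Fix a grid step h > 0, a reference point x ∈ ℝ, real numbers a, b, c, and a real ν with ν ≠ 1/2. Let p₀ be the unique polynomial of degree ≤ 1 with p₀(x − h) = a and cell average b over [x − h, x]; let p₁ be the unique polynomial of degree ≤ 1 with cell average b over [x − h, x] and p₁(x) = c; and let q be the unique polynomial of degree ≤ 2 with q(x − h) = a, cell average b over [x − h, x], and q(x) = c. Then q(x − νh) = ((3ν² − 2ν)/(2ν − 1))·p₀(x − νh) + ((−3ν² + 4ν − 1)/(2ν − 1))·p₁(x − νh). -/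
open intervalIntegral

/-!
Each reconstruction is linear in its data, so the claim reduces to comparing the coefficients of
`a`, `b` and `c` in

* `q (x - ν h) = (3 ν² - 2 ν) a + 6 ν (1 - ν) b + (1 - ν) (1 - 3 ν) c`,
* `p₀ (x - ν h) = (2 ν - 1) a + 2 (1 - ν) b`,
* `p₁ (x - ν h) = 2 ν b + (1 - 2 ν) c`.

Only `p₀` sees `a` and only `p₁` sees `c`, which forces the two weights; the coefficients of `b`
then agree because the weights sum to `1`. The formulas themselves hold because Simpson's rule is
exact in degree at most three, so a cell average prescribes the midpoint value in terms of the
endpoint values.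
-/

section CellAverageReconstruction

open Polynomial

variable {p : ℝ[X]} {α β : ℝ}

theorem integral_eval_eq_sum_range' {n : ℕ} (hp : p.natDegree < n) :
    ∫ s in α..β, p.eval s =
      ∑ i ∈ Finset.range n, p.coeff i * ((β ^ (i + 1) - α ^ (i + 1)) / (i + 1)) := by
  have monomial_integrable (i : ℕ) :
      IntervalIntegrable (fun s ↦ p.coeff i * s ^ i) MeasureTheory.volume α β :=
    Continuous.intervalIntegrable (by fun_prop) α β
  simp only [eval_eq_sum_range' hp, integral_finsetSum fun i _ ↦ monomial_integrable i,
    integral_const_mul, integral_pow]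

theorem integral_eval_eq_simpson (hp : p.natDegree ≤ 3) :
    ∫ s in α..β, p.eval s =
      (β - α) / 6 * (p.eval α + 4 * p.eval ((α + β) / 2) + p.eval β) := by
  rw [integral_eval_eq_sum_range' (Nat.lt_add_one_of_le hp)]
  simp only [eval_eq_sum_range' (Nat.lt_add_one_of_le hp), Finset.sum_range_succ,
    Finset.sum_range_zero]
  push_cast
  ring

theorem interval_average_eval_eq_simpson (hp : p.natDegree ≤ 3) (hαβ : α ≠ β) :
    ⨍ s in α..β, p.eval s = (p.eval α + 4 * p.eval ((α + β) / 2) + p.eval β) / 6 := by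
  have hlen : β - α ≠ 0 := sub_ne_zero.mpr hαβ.symm
  rw [interval_average_eq_div, integral_eval_eq_simpson hp]
  field_simp

theorem eval_lineMap_eq_average_of_natDegree_le_two (hp : p.natDegree ≤ 2) (hαβ : α ≠ β) (t : ℝ) :
    p.eval (AffineMap.lineMap α β t) =
      (1 - t) * (1 - 3 * t) * p.eval α + 6 * t * (1 - t) * (⨍ s in α..β, p.eval s)
        + t * (3 * t - 2) * p.eval β := by
  rw [interval_average_eval_eq_simpson (by lia) hαβ, AffineMap.lineMap_apply_ring']
  simp only [eval_eq_sum_range' (Nat.lt_add_one_of_le hp), Finset.sum_range_succ,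
    Finset.sum_range_zero]
  ring

theorem eval_lineMap_eq_average_of_natDegree_le_one (hp : p.natDegree ≤ 1) (hαβ : α ≠ β) (t : ℝ) :
    p.eval (AffineMap.lineMap α β t) =
      (1 - 2 * t) * p.eval α + 2 * t * ⨍ s in α..β, p.eval s := by
  rw [interval_average_eval_eq_simpson (by lia) hαβ, AffineMap.lineMap_apply_ring']
  simp only [eval_eq_sum_range' (Nat.lt_add_one_of_le hp), Finset.sum_range_succ,
    Finset.sum_range_zero]
  ring

end CellAverageReconstruction

/-- Optimal linear weight identity of Table 2 for r = 2: the big-stencil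
point-value reconstruction q(x − νh) is recovered from the two sub-stencil
point values with the stated weights, for ν ≠ 1/2. -/
theorem stmt_10 (h : ℝ) (hh : 0 < h) (x a b c ν : ℝ) (hν : ν ≠ 1/2)
    (p₀ : Polynomial ℝ) (hdeg₀ : p₀.natDegree ≤ 1)
    (hp₀a : p₀.eval (x - h) = a)
    (hp₀b : (1 / h) * ∫ s in (x - h)..x, p₀.eval s = b)
    (p₁ : Polynomial ℝ) (hdeg₁ : p₁.natDegree ≤ 1)
    (hp₁b : (1 / h) * ∫ s in (x - h)..x, p₁.eval s = b)
    (hp₁c : p₁.eval x = c)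
    (q : Polynomial ℝ) (hdegq : q.natDegree ≤ 2)
    (hqa : q.eval (x - h) = a)
    (hqb : (1 / h) * ∫ s in (x - h)..x, q.eval s = b)
    (hqc : q.eval x = c) :
    q.eval (x - ν * h)
      = ((3*ν^2 - 2*ν) / (2*ν - 1)) * p₀.eval (x - ν * h)
        + ((-3*ν^2 + 4*ν - 1) / (2*ν - 1)) * p₁.eval (x - ν * h) := by
  have hcell : x - h ≠ x := (sub_lt_self x hh).ne
  have average_eq (f : ℝ → ℝ) : ⨍ s in (x - h)..x, f s = (1 / h) * ∫ s in (x - h)..x, f s := by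
    rw [interval_average_eq, sub_sub_cancel, one_div, smul_eq_mul]
  have point_eq : AffineMap.lineMap (x - h) x (1 - ν) = x - ν * h := by
    rw [AffineMap.lineMap_apply_ring']
    ring
  have hq : q.eval (x - ν * h) =
      (3 * ν ^ 2 - 2 * ν) * a + 6 * ν * (1 - ν) * b + (1 - ν) * (1 - 3 * ν) * c := by
    rw [← point_eq, eval_lineMap_eq_average_of_natDegree_le_two hdegq hcell, average_eq,
      hqa, hqb, hqc]
    ring
  have hp₀ : p₀.eval (x - ν * h) = (2 * ν - 1) * a + 2 * (1 - ν) * b := by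
    rw [← point_eq, eval_lineMap_eq_average_of_natDegree_le_one hdeg₀ hcell, average_eq,
      hp₀a, hp₀b]
    ring
  have hp₁ : p₁.eval (x - ν * h) = (1 - 2 * ν) * c + 2 * ν * b := by
    rw [← point_eq, AffineMap.lineMap_apply_one_sub,
      eval_lineMap_eq_average_of_natDegree_le_one hdeg₁ hcell.symm, interval_average_symm,
      average_eq, hp₁c, hp₁b]
  have hν' : 2 * ν - 1 ≠ 0 := fun h0 ↦ hν (by linarith)
  rw [hq, hp₀, hp₁, div_mul_eq_mul_div, div_mul_eq_mul_div, ← add_div, eq_div_iff hν']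
  ring
end

section
/- Let u be a polynomial with real coefficients of degree at most 3 and let c₃ be its coefficient of X³. Fix h > 0 and x ∈ ℝ, and let q be the unique polynomial of degree at most 2 with q(x − h) = u(x − h), cell average over [x − h, x] equal to that of u, and q(x) = u(x). Then for every real ν ≠ 0, (1/(νh))·∫_{x−νh}^{x} (u(s) − q(s)) ds = −(c₃/4)·ν·(1 − ν)²·h³. -/
open intervalIntegral

/-!
The error `u - q` is a polynomial of degree at most `3` vanishing at both nodes `x - h` and `x` and
with zero mean between them. Its primitive vanishing at `x` has degree at most `4` and therefore a
double zero at each node, so it is `c₃ / 4 * (s - (x - h)) ^ 2 * (s - x) ^ 2`. The error average is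
minus the value of this primitive at `s = x - ν * h`, divided by `ν * h`. The same argument works
for any number of nodes.
-/

section DoubleRoots

open Polynomial Lagrange

variable {R : Type*} [CommRing R] [IsDomain R] {S : Finset R} {P : R[X]}

lemma nodal_sq_dvd_of_forall_isRoot_derivative (hroot : ∀ a ∈ S, P.IsRoot a)
    (hroot' : ∀ a ∈ S, (derivative P).IsRoot a) : nodal S id ^ 2 ∣ P := by
  classical
  rcases eq_or_ne P 0 with rfl | hP
  · exact dvd_zero _
  have hle : 2 • S.val ≤ P.roots := Multiset.le_iff_count.mpr fun a => by
    by_cases ha : a ∈ S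
    · have hmult : 1 < P.rootMultiplicity a :=
        (one_lt_rootMultiplicity_iff_isRoot hP).mpr ⟨hroot a ha, hroot' a ha⟩
      rw [Multiset.count_nsmul, Multiset.count_eq_one_of_mem S.nodup ha, count_roots]
      exact hmult
    · simp [Multiset.count_eq_zero_of_notMem (show a ∉ S.val from ha)]
  simpa [nodal, Multiset.map_nsmul, Multiset.prod_nsmul] using
    (Multiset.prod_X_sub_C_dvd_iff_le_roots hP _).mpr hle

lemma eq_C_mul_nodal_sq_of_forall_isRoot_derivative (hdeg : P.natDegree ≤ 2 * S.card)
    (hroot : ∀ a ∈ S, P.IsRoot a) (hroot' : ∀ a ∈ S, (derivative P).IsRoot a) :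
    P = C (P.coeff (2 * S.card)) * nodal S id ^ 2 := by
  have hmonic : (nodal S id ^ 2 : R[X]).Monic := nodal_monic.pow 2
  have hnodal : (nodal S id ^ 2 : R[X]).natDegree = 2 * S.card := by
    rw [natDegree_pow, natDegree_nodal]
  have hP : P = C P.leadingCoeff * nodal S id ^ 2 :=
    eq_leadingCoeff_mul_of_monic_of_dvd_of_natDegree_le hmonic
      (nodal_sq_dvd_of_forall_isRoot_derivative hroot hroot') (hnodal ▸ hdeg)
  have hcoeff : P.coeff (2 * S.card) = P.leadingCoeff := by
    conv_lhs => rw [hP, coeff_C_mul, ← hnodal, hmonic.coeff_natDegree, mul_one]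
  rwa [hcoeff]

end DoubleRoots

section Primitive

open Polynomial

lemma derivative_surjective {K : Type*} [Field K] [CharZero K] :
    Function.Surjective (derivative : K[X] → K[X]) := fun p => by
  induction p using Polynomial.induction_on' with
  | add p q hp hq =>
    obtain ⟨P, rfl⟩ := hp
    obtain ⟨Q, rfl⟩ := hq
    exact ⟨P + Q, derivative_add⟩
  | monomial n c =>
    have hn : (n + 1 : K) ≠ 0 := n.cast_add_one_ne_zero
    exact ⟨monomial (n + 1) (c / (n + 1)), by simp [hn]⟩

lemma exists_derivative_eq_and_isRoot {K : Type*} [Field K] [CharZero K] (p : K[X]) (a : K) :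
    ∃ P : K[X], derivative P = p ∧ P.IsRoot a := by
  obtain ⟨P, rfl⟩ := derivative_surjective p
  exact ⟨P - C (P.eval a), by simp, by simp⟩

lemma integral_eval_derivative (P : ℝ[X]) (a b : ℝ) :
    ∫ s in a..b, (derivative P).eval s = P.eval b - P.eval a :=
  integral_eq_sub_of_hasDerivAt (fun s _ => P.hasDerivAt s)
    ((derivative P).continuous.intervalIntegrable a b)

end Primitive

section Interpolation

open Polynomial Lagrange

lemma integral_eval_eq_neg_mul_prod_sq_of_forall_isRoot {S : Finset ℝ} {n : ℕ} {p : ℝ[X]} {b : ℝ}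
    (hcard : S.card = n + 1) (hdeg : p.natDegree ≤ 2 * n + 1)
    (hroot : ∀ a ∈ S, p.IsRoot a) (hint : ∀ a ∈ S, ∫ s in a..b, p.eval s = 0) (t : ℝ) :
    ∫ s in t..b, p.eval s = -(p.coeff (2 * n + 1) / (2 * n + 2)) * ∏ a ∈ S, (t - a) ^ 2 := by
  obtain ⟨P, rfl, hPb⟩ := exists_derivative_eq_and_isRoot p b
  have hintegral (a : ℝ) : ∫ s in a..b, (derivative P).eval s = -P.eval a := by
    rw [integral_eval_derivative, hPb.eq_zero, zero_sub]
  have hProot : ∀ a ∈ S, P.IsRoot a := fun a ha =>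
    neg_eq_zero.mp ((hintegral a).symm.trans (hint a ha))
  have hPdeg : P.natDegree ≤ 2 * S.card := by
    rw [natDegree_derivative] at hdeg
    omega
  have hPcoeff : (derivative P).coeff (2 * n + 1) / (2 * n + 2) = P.coeff (2 * S.card) := by
    have hn : (2 * n + 2 : ℝ) ≠ 0 := by positivity
    rw [coeff_derivative, hcard, div_eq_iff hn]
    push_cast
    ring_nf
  have hPeval : P.eval t = P.coeff (2 * S.card) * ∏ a ∈ S, (t - a) ^ 2 := by
    conv_lhs => rw [eq_C_mul_nodal_sq_of_forall_isRoot_derivative hPdeg hProot hroot]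
    simp only [eval_mul, eval_C, eval_pow, eval_nodal, id_eq, Finset.prod_pow]
  rw [hintegral, hPeval, hPcoeff, neg_mul]

lemma integral_eval_eq_of_natDegree_le_three {p : ℝ[X]} {a b : ℝ} (hdeg : p.natDegree ≤ 3)
    (hab : a ≠ b) (ha : p.IsRoot a) (hb : p.IsRoot b) (hint : ∫ s in a..b, p.eval s = 0) (t : ℝ) :
    ∫ s in t..b, p.eval s = -(p.coeff 3 / 4) * ((t - a) ^ 2 * (t - b) ^ 2) := by
  have hprod := integral_eval_eq_neg_mul_prod_sq_of_forall_isRoot (S := {a, b}) (n := 1) (b := b)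
    (Finset.card_pair hab) hdeg (by simp [ha.eq_zero, hb.eq_zero]) (by simp [hint]) t
  rw [hprod, Finset.prod_pair hab]
  norm_num

end Interpolation

/-- Exact leading-error formula for the CFWENO3 big-stencil average
reconstruction on a cubic: the error is −(c₃/4)·ν(1 − ν)²·h³. -/
theorem stmt_14 (u : Polynomial ℝ) (hu : u.natDegree ≤ 3)
    (c₃ : ℝ) (hc₃ : c₃ = u.coeff 3)
    (h : ℝ) (hh : 0 < h) (x : ℝ)
    (q : Polynomial ℝ) (hdeg : q.natDegree ≤ 2)
    (hqa : q.eval (x - h) = u.eval (x - h))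
    (hqb : (1 / h) * ∫ s in (x - h)..x, q.eval s
            = (1 / h) * ∫ s in (x - h)..x, u.eval s)
    (hqc : q.eval x = u.eval x) :
    ∀ ν : ℝ, ν ≠ 0 →
      (1 / (ν * h)) * ∫ s in (x - ν * h)..x, (u.eval s - q.eval s)
        = -(c₃ / 4) * ν * (1 - ν)^2 * h^3 := by
  intro ν hν
  have hdeg_sub : (u - q).natDegree ≤ 3 := Polynomial.natDegree_sub_le_of_le hu (by omega)
  have hcoeff : (u - q).coeff 3 = c₃ := by
    rw [Polynomial.coeff_sub, Polynomial.coeff_eq_zero_of_natDegree_lt (by omega : q.natDegree < 3),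
      sub_zero, hc₃]
  have hmean : ∫ s in (x - h)..x, (u - q).eval s = 0 := by
    simp only [Polynomial.eval_sub]
    rw [integral_sub (u.continuous.intervalIntegrable _ _) (q.continuous.intervalIntegrable _ _),
      mul_left_cancel₀ (one_div_ne_zero hh.ne') hqb, sub_self]
  have herror := integral_eval_eq_of_natDegree_le_three hdeg_sub (sub_lt_self x hh).ne
    (by simp [hqa]) (by simp [hqc]) hmean (x - ν * h)
  simp only [Polynomial.eval_sub, hcoeff] at herror
  rw [herror]
  field_simp
  ring
end

section
/- Fix h > 0, x₀ ∈ ℝ, and real numbers a, b, c. Let p be the unique polynomial of degree at most 2 with p(x₀) = a, cell average b over [x₀, x₀ + h], and p(x₀ + h) = c. Then ∫_{x₀}^{x₀+h} ( h·p′(s)² + h³·p″(s)² ) ds = (c − a)² + 39·(a − 2b + c)². -/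
open intervalIntegral Polynomial

/-!
For a polynomial `p` of degree at most two with `X²`-coefficient `k`, the error of the trapezoidal
rule on a cell of width `h` is exactly `k h³ / 6`. Applied to `p`, this turns the second difference
`D = a - 2b + c` of the end values and the cell average into `k h² = 3 D`. Applied to `(p')²`, whose
`X²`-coefficient is `4 k²`, it gives `h ∫ (p')² = (c - a)² + k² h⁴ / 3`. Since `p'' = 2 k`, the
smoothness indicator is `(c - a)² + (1/3 + 4) k² h⁴ = (c - a)² + 39 D²`.
-/

section CommSemiring

variable {R : Type*} [CommSemiring R] {p : R[X]}

lemma natDegree_derivative_le_of_natDegree_le_succ {n : ℕ} (hp : p.natDegree ≤ n + 1) :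
    (derivative p).natDegree ≤ n :=
  (natDegree_derivative_le p).trans (Nat.sub_le_of_le_add hp)

lemma eval_eq_quadratic_of_natDegree_le_two (hp : p.natDegree ≤ 2) (s : R) :
    p.eval s = p.coeff 0 + p.coeff 1 * s + p.coeff 2 * s ^ 2 := by
  simp only [eval_eq_sum_range' (Nat.lt_succ_of_le hp), Finset.sum_range_succ,
    Finset.sum_range_zero, zero_add, pow_zero, mul_one, pow_one]

lemma derivative_eq_linear_of_natDegree_le_two (hp : p.natDegree ≤ 2) :
    derivative p = C (2 * p.coeff 2) * X + C (p.coeff 1) := by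
  rw [eq_X_add_C_of_natDegree_le_one (natDegree_derivative_le_of_natDegree_le_succ hp),
    coeff_derivative, coeff_derivative]
  norm_num [mul_comm]

lemma derivative_derivative_eq_C_of_natDegree_le_two (hp : p.natDegree ≤ 2) :
    derivative (derivative p) = C (2 * p.coeff 2) := by
  rw [derivative_eq_linear_of_natDegree_le_two hp, derivative_add, derivative_C_mul_X,
    derivative_C, add_zero]

lemma natDegree_derivative_sq_le_two (hp : p.natDegree ≤ 2) :
    (derivative p ^ 2).natDegree ≤ 2 :=
  natDegree_pow_le_of_le 2 (natDegree_derivative_le_of_natDegree_le_succ hp)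

lemma coeff_two_derivative_sq (hp : p.natDegree ≤ 2) :
    (derivative p ^ 2).coeff 2 = (2 * p.coeff 2) ^ 2 := by
  calc (derivative p ^ 2).coeff 2
      = (derivative p).coeff 1 ^ 2 :=
        coeff_pow_of_natDegree_le (m := 2) (natDegree_derivative_le_of_natDegree_le_succ hp)
    _ = (2 * p.coeff 2) ^ 2 := by
        rw [coeff_derivative]
        norm_num [mul_comm]

end CommSemiring

section CommRing

variable {R : Type*} [CommRing R] {p : R[X]}

lemma eval_derivative_sub_of_natDegree_le_two (hp : p.natDegree ≤ 2) (s t : R) :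
    (derivative p).eval t - (derivative p).eval s = 2 * p.coeff 2 * (t - s) := by
  simp only [derivative_eq_linear_of_natDegree_le_two hp, eval_add, eval_mul, eval_C, eval_X]
  ring

lemma two_mul_eval_sub_of_natDegree_le_two (hp : p.natDegree ≤ 2) (s t : R) :
    2 * (p.eval t - p.eval s) =
      (t - s) * ((derivative p).eval s + (derivative p).eval t) := by
  simp only [eval_eq_quadratic_of_natDegree_le_two hp,
    derivative_eq_linear_of_natDegree_le_two hp, eval_add, eval_mul, eval_C, eval_X]
  ring

end CommRing

section Integral

variable {p : ℝ[X]}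

lemma integral_eval_eq_trapezoid_sub (hp : p.natDegree ≤ 2) (α β : ℝ) :
    ∫ s in α..β, p.eval s =
      (β - α) / 2 * (p.eval α + p.eval β) - p.coeff 2 * (β - α) ^ 3 / 6 := by
  have integrable_monomial (i : ℕ) : IntervalIntegrable
      (fun s ↦ p.coeff i * s ^ i) MeasureTheory.volume α β :=
    Continuous.intervalIntegrable (by fun_prop) α β
  simp only [eval_eq_sum_range' (Nat.lt_succ_of_le hp)]
  rw [integral_finsetSum fun i _ ↦ integrable_monomial i]
  simp only [integral_const_mul, integral_pow, Finset.sum_range_succ, Finset.sum_range_zero]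
  push_cast
  ring

lemma mul_integral_sq_eval_derivative (hp : p.natDegree ≤ 2) (α β : ℝ) :
    (β - α) * ∫ s in α..β, (derivative p).eval s ^ 2 =
      (p.eval β - p.eval α) ^ 2 + p.coeff 2 ^ 2 * (β - α) ^ 4 / 3 := by
  set u := (derivative p).eval α
  set v := (derivative p).eval β
  have trapezoid : ∫ s in α..β, (derivative p).eval s ^ 2 =
      (β - α) / 2 * (u ^ 2 + v ^ 2) - (2 * p.coeff 2) ^ 2 * (β - α) ^ 3 / 6 := by
    simpa only [eval_pow, coeff_two_derivative_sq hp] using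
      integral_eval_eq_trapezoid_sub (natDegree_derivative_sq_le_two hp) α β
  have slope_sub : v - u = 2 * p.coeff 2 * (β - α) :=
    eval_derivative_sub_of_natDegree_le_two hp α β
  have value_sub : p.eval β - p.eval α = (β - α) * (u + v) / 2 := by
    linarith [two_mul_eval_sub_of_natDegree_le_two hp α β]
  calc (β - α) * ∫ s in α..β, (derivative p).eval s ^ 2
      = ((β - α) * (u + v) / 2) ^ 2 + (β - α) ^ 2 * (v - u) ^ 2 / 4
          - 2 * p.coeff 2 ^ 2 * (β - α) ^ 4 / 3 := by
        rw [trapezoid]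
        ring
    _ = (p.eval β - p.eval α) ^ 2 + p.coeff 2 ^ 2 * (β - α) ^ 4 / 3 := by
        rw [← value_sub, slope_sub]
        ring

lemma integral_weighted_sq_derivatives (hp : p.natDegree ≤ 2) (α β : ℝ) :
    ∫ s in α..β, ((β - α) * (derivative p).eval s ^ 2
        + (β - α) ^ 3 * (derivative (derivative p)).eval s ^ 2) =
      (p.eval β - p.eval α) ^ 2 + 13 / 3 * (p.coeff 2 * (β - α) ^ 2) ^ 2 := by
  have integrable_first : IntervalIntegrable
      (fun s ↦ (β - α) * (derivative p).eval s ^ 2) MeasureTheory.volume α β :=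
    Continuous.intervalIntegrable (by fun_prop) α β
  simp only [derivative_derivative_eq_C_of_natDegree_le_two hp, eval_C]
  rw [integral_add integrable_first intervalIntegrable_const, integral_const_mul, integral_const,
    smul_eq_mul, mul_integral_sq_eval_derivative hp]
  ring

end Integral

/-- Explicit evaluation of the Jiang–Shu-type smoothness indicator β₁³ of
formula (26) for the middle CFWENO5 sub-stencil. -/
theorem stmt_16 (h : ℝ) (hh : 0 < h) (x₀ a b c : ℝ)
    (p : Polynomial ℝ) (hdeg : p.natDegree ≤ 2)
    (hpa : p.eval x₀ = a)
    (hpb : (1 / h) * ∫ s in x₀..(x₀ + h), p.eval s = b)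
    (hpc : p.eval (x₀ + h) = c) :
    (∫ s in x₀..(x₀ + h),
        (h * ((Polynomial.derivative p).eval s)^2
          + h^3 * ((Polynomial.derivative (Polynomial.derivative p)).eval s)^2))
      = (c - a)^2 + 39 * (a - 2*b + c)^2 := by
  have coeff_two_mul_sq : p.coeff 2 * h ^ 2 = 3 * (a - 2 * b + c) := by
    rw [← hpb, integral_eval_eq_trapezoid_sub hdeg, hpa, hpc]
    field_simp
    ring
  have indicator := integral_weighted_sq_derivatives hdeg x₀ (x₀ + h)
  rw [add_sub_cancel_left, hpa, hpc, coeff_two_mul_sq] at indicator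
  rw [indicator]
  ring
end

section
/- For every real ν with 0 < ν < 1, the following three strict inequalities hold: (1/4)·ν(1 − ν)² < (1/24)·(1 − ν²)(2 − ν); (1/36)·ν(1 − ν)²(1 + ν)(2 − ν) < (1/720)·(1 − ν²)(4 − ν²)(3 − ν); and (1/576)·ν(1 − ν)²(1 + ν)²(2 − ν)² < (1/40320)·(1 − ν²)(4 − ν²)(9 − ν²)(4 − ν). -/
/-!
Put `w = ν (1 - ν)`. Since `(k + ν) (k + 1 - ν) = k (k + 1) + w`, dividing each inequality by the
positive factor common to its two sides leaves an inequality in `w` alone, namely `6 w < 2 + w`,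
`20 w < 6 + w` and `70 w (2 + w) < (6 + w) (12 + w)`. These hold because `w ≤ 1 / 4` and, for the
last one, `-2 < w`. The constants `6`, `20`, `70` are the ratios `(2 r)! / (r !)²`, `r = 2, 3, 4`.
-/

section ErrorCoefficients

variable {K : Type*} [Field K] [LinearOrder K] [IsStrictOrderedRing K] {ν : K}

lemma mul_one_sub_le_one_fourth (ν : K) : ν * (1 - ν) ≤ 1 / 4 := by
  linarith [four_mul_le_sq_add ν (1 - ν)]

lemma neg_two_lt_mul_one_sub (h₁ : -1 < ν) (h₂ : ν < 2) : -2 < ν * (1 - ν) := by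
  rw [← sub_pos]
  calc
    0 < (1 + ν) * (2 - ν) := mul_pos (by linarith) (by linarith)
    _ = _ := by ring

lemma one_sub_mul_one_add_mul_two_sub_pos (h₁ : -1 < ν) (h₂ : ν < 1) :
    0 < (1 - ν) * (1 + ν) * (2 - ν) :=
  mul_pos (mul_pos (by linarith) (by linarith)) (by linarith)

lemma seventy_mul_mul_two_add_lt {w : K} (h₁ : -2 < w) (h₂ : w ≤ 1 / 4) :
    70 * (w * (2 + w)) < (6 + w) * (12 + w) := by
  have endpoint_product_nonneg : 0 ≤ (w + 2) * (1 / 4 - w) := mul_nonneg (by linarith) (by linarith)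
  linarith

theorem cfweno_third_order_error_lt_fweno (h : ν < 1) :
    (1/4) * (ν * (1 - ν)^2) < (1/24) * ((1 - ν^2) * (2 - ν)) := by
  have cofactor_lt : 6 * (ν * (1 - ν)) < 2 + ν * (1 - ν) := by
    linarith [mul_one_sub_le_one_fourth ν]
  calc
    _ = (1/24) * ((1 - ν) * (6 * (ν * (1 - ν)))) := by ring
    _ < (1/24) * ((1 - ν) * (2 + ν * (1 - ν))) :=
      mul_lt_mul_of_pos_left (mul_lt_mul_of_pos_left cofactor_lt (sub_pos.mpr h)) (by norm_num)
    _ = _ := by ring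

theorem cfweno_fifth_order_error_lt_fweno (h₁ : -1 < ν) (h₂ : ν < 1) :
    (1/36) * (ν * (1 - ν)^2 * (1 + ν) * (2 - ν))
      < (1/720) * ((1 - ν^2) * (4 - ν^2) * (3 - ν)) := by
  have cofactor_lt : 20 * (ν * (1 - ν)) < 6 + ν * (1 - ν) := by
    linarith [mul_one_sub_le_one_fourth ν]
  calc
    _ = (1/720) * ((1 - ν) * (1 + ν) * (2 - ν) * (20 * (ν * (1 - ν)))) := by ring
    _ < (1/720) * ((1 - ν) * (1 + ν) * (2 - ν) * (6 + ν * (1 - ν))) :=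
      mul_lt_mul_of_pos_left
        (mul_lt_mul_of_pos_left cofactor_lt (one_sub_mul_one_add_mul_two_sub_pos h₁ h₂))
        (by norm_num)
    _ = _ := by ring

theorem cfweno_seventh_order_error_lt_fweno (h₁ : -1 < ν) (h₂ : ν < 1) :
    (1/576) * (ν * (1 - ν)^2 * (1 + ν)^2 * (2 - ν)^2)
      < (1/40320) * ((1 - ν^2) * (4 - ν^2) * (9 - ν^2) * (4 - ν)) := by
  have cofactor_lt : 70 * (ν * (1 - ν) * (2 + ν * (1 - ν)))
      < (6 + ν * (1 - ν)) * (12 + ν * (1 - ν)) :=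
    seventy_mul_mul_two_add_lt (neg_two_lt_mul_one_sub h₁ (by linarith))
      (mul_one_sub_le_one_fourth ν)
  calc
    _ = (1/40320) * ((1 - ν) * (1 + ν) * (2 - ν)
          * (70 * (ν * (1 - ν) * (2 + ν * (1 - ν))))) := by ring
    _ < (1/40320) * ((1 - ν) * (1 + ν) * (2 - ν)
          * ((6 + ν * (1 - ν)) * (12 + ν * (1 - ν)))) :=
      mul_lt_mul_of_pos_left
        (mul_lt_mul_of_pos_left cofactor_lt (one_sub_mul_one_add_mul_two_sub_pos h₁ h₂))
        (by norm_num)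
    _ = _ := by ring

theorem stmt_19_general (h₁ : -1 < ν) (h₂ : ν < 1) :
    (1/4) * (ν * (1 - ν)^2) < (1/24) * ((1 - ν^2) * (2 - ν)) ∧
    (1/36) * (ν * (1 - ν)^2 * (1 + ν) * (2 - ν))
      < (1/720) * ((1 - ν^2) * (4 - ν^2) * (3 - ν)) ∧
    (1/576) * (ν * (1 - ν)^2 * (1 + ν)^2 * (2 - ν)^2)
      < (1/40320) * ((1 - ν^2) * (4 - ν^2) * (9 - ν^2) * (4 - ν)) :=
  ⟨cfweno_third_order_error_lt_fweno h₂, cfweno_fifth_order_error_lt_fweno h₁ h₂,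
    cfweno_seventh_order_error_lt_fweno h₁ h₂⟩

end ErrorCoefficients

/-- For ν ∈ (0, 1), the CFWENO error coefficients of Table 4 are strictly
smaller than the corresponding FWENO error coefficients. -/
theorem stmt_19 :
    ∀ ν : ℝ, 0 < ν → ν < 1 →
      (1/4) * (ν * (1 - ν)^2) < (1/24) * ((1 - ν^2) * (2 - ν)) ∧
      (1/36) * (ν * (1 - ν)^2 * (1 + ν) * (2 - ν))
        < (1/720) * ((1 - ν^2) * (4 - ν^2) * (3 - ν)) ∧
      (1/576) * (ν * (1 - ν)^2 * (1 + ν)^2 * (2 - ν)^2)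
        < (1/40320) * ((1 - ν^2) * (4 - ν^2) * (9 - ν^2) * (4 - ν)) :=
  fun _ h₀ h₁ => stmt_19_general (by linarith) h₁
end
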